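/- arXiv:1304.1839 — 2 statements merged into one kernel-verified Lean document; each statement's English description precedes it below -/
import Mathlib

section
/- Let x, y ∈ ℂⁿ be linearly independent and T = xx* − yy*. For x', y' ∈ ℂⁿ defined by x' = b₁₁x + b₁₂y and y' = b₂₁x + b₂₂y for a 2×2 complex matrix B = (b_{ij}), one has x'(x')* − y'(y')* = xx* − yy* if and only if B* D B = D, where D = [[1,0],[0,−1]]. Moreover every pair (x',y') with x'(x')* − y'(y')* = xx* − yy* arises this way from some B with B* D B = D. -/
open scoped BigOperators ComplexConjugate
open Matrix

noncomputable section

/-- Inner product on `ℂⁿ`, linear in the first argument: `⟨x,y⟩ = ∑ⱼ xⱼ conj(yⱼ)`. -/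
def cip {n : ℕ} (x y : Fin n → ℂ) : ℂ := ∑ j, x j * (starRingEnd ℂ) (y j)

/-- Squared Euclidean norm on `ℂⁿ`. -/
def cnSq {n : ℕ} (x : Fin n → ℂ) : ℝ := ∑ j, Complex.normSq (x j)

/-- The phaseless measurement map `α(x)ₖ = |⟨x,fₖ⟩|²`. -/
def alphaMap {n m : ℕ} (f : Fin m → Fin n → ℂ) (x : Fin n → ℂ) : Fin m → ℝ :=
  fun k => Complex.normSq (cip x (f k))

/-- `α` is injective up to a global phase. -/
def InjUpToPhase {n m : ℕ} (f : Fin m → Fin n → ℂ) : Prop :=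
  ∀ x y : Fin n → ℂ, alphaMap f x = alphaMap f y → ∃ c : ℂ, ‖c‖ = 1 ∧ y = c • x

/-- Rank-one operator `u v*`, with entries `uᵢ conj(vⱼ)`. -/
def outer {n : ℕ} (u v : Fin n → ℂ) : Matrix (Fin n) (Fin n) ℂ :=
  Matrix.vecMulVec u (star v)

/-- Symmetric outer product `[u,v] = ½(uv* + vu*)`. -/
def symOuter {n : ℕ} (u v : Fin n → ℂ) : Matrix (Fin n) (Fin n) ℂ :=
  (1/2 : ℂ) • (outer u v + outer v u)

/-! Let `Y` be the matrix whose rows are the given vectors, so that `xx* − yy*` is the transpose of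
`Yᴴ * D * Y`. Passing from `Y` to `B * Y` turns `D` into `Bᴴ * D * B`, and independence of the rows
lets one cancel `Yᴴ` and `Y`. For the converse, applying a left inverse of `v ↦ v ᵥ* Y` to every row
of `Y'ᴴ * D * Y' = Yᴴ * D * Y` solves for `Y` as `A * Y'`; the same left inverse then exhibits a
right inverse of the square matrix `A`, so `A` is invertible and `Y' = A⁻¹ * Y`. -/

section Cancellation

variable {R ι κ m n : Type*} [Ring R] [Fintype ι]

theorem mul_left_injective_of_linearIndependent_row {Y : Matrix ι m R}
    (hY : LinearIndependent R Y.row) : Function.Injective fun A : Matrix κ ι R => A * Y := by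
  intro A B h
  funext i
  apply vecMul_injective_iff.2 hY
  simpa only [mul_apply_eq_vecMul] using congrFun h i

variable [StarRing R] [Fintype κ]

theorem conjTranspose_mul_mul_inj {X : Matrix κ m R} {Y : Matrix ι n R}
    (hX : LinearIndependent R X.row) (hY : LinearIndependent R Y.row) {A B : Matrix κ ι R} :
    Xᴴ * A * Y = Xᴴ * B * Y ↔ A = B := by
  refine ⟨fun h => ?_, fun h => by rw [h]⟩
  have h_left : Xᴴ * A = Xᴴ * B := mul_left_injective_of_linearIndependent_row hY h
  apply conjTranspose_injective
  apply mul_left_injective_of_linearIndependent_row hX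
  simpa only [conjTranspose_mul, conjTranspose_conjTranspose] using congrArg conjTranspose h_left

theorem conjTranspose_mul_mul_eq_iff {Y : Matrix ι m R} (hY : LinearIndependent R Y.row)
    {D : Matrix ι ι R} {E : Matrix κ κ R} (B : Matrix κ ι R) :
    (B * Y)ᴴ * E * (B * Y) = Yᴴ * D * Y ↔ Bᴴ * E * B = D := by
  rw [← conjTranspose_mul_mul_inj hY hY]
  simp only [conjTranspose_mul, Matrix.mul_assoc]

end Cancellation

section MapRows

variable {R ι κ m n : Type*}

/-- The matrix obtained from `Y` by applying the linear map `L` to each of its rows. It serves as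
multiplication by a matrix on the right, without requiring the column index type to be finite. -/
def mapRows [Semiring R] (L : (m → R) →ₗ[R] n → R) (Y : Matrix ι m R) : Matrix ι n R :=
  of fun i => L (Y i)

theorem mapRows_mul [Semiring R] [Fintype ι] (L : (m → R) →ₗ[R] n → R) (A : Matrix κ ι R)
    (Y : Matrix ι m R) : mapRows L (A * Y) = A * mapRows L Y := by
  ext i j
  simp only [mapRows, of_apply, mul_apply_eq_vecMul, vecMul_eq_sum, map_sum, map_smul]
  rfl

theorem exists_mapRows_eq_one [DivisionRing R] [Finite ι] [DecidableEq ι] {Y : Matrix ι m R}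
    (hY : LinearIndependent R Y.row) : ∃ L : (m → R) →ₗ[R] ι → R, mapRows L Y = 1 := by
  have := Fintype.ofFinite ι
  obtain ⟨L, hL⟩ := LinearMap.exists_leftInverse_of_injective Y.vecMulLinear
    (LinearMap.ker_eq_bot.2 (vecMul_injective_iff.2 hY))
  refine ⟨L, ext fun i j => ?_⟩
  have h_row : L (Y i) = Pi.single i 1 := by
    simpa [row] using LinearMap.congr_fun hL (Pi.single i 1)
  rw [mapRows, of_apply, h_row, one_eq_pi_single]

end MapRows

section HermitianForms

variable {K ι m : Type*} [DivisionRing K] [StarRing K] [Fintype ι] [DecidableEq ι]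

theorem exists_eq_mul_of_conjTranspose_mul_mul_eq {Y Y' : Matrix ι m K}
    (hY : LinearIndependent K Y.row) {D E : Matrix ι ι K} (hD : IsUnit D)
    (h : Y'ᴴ * E * Y' = Yᴴ * D * Y) : ∃ B : Matrix ι ι K, Y' = B * Y := by
  obtain ⟨L, hL⟩ := exists_mapRows_eq_one hY
  obtain ⟨F, hDF⟩ := hD.exists_right_inv
  set B := mapRows L Y'
  set A := (E * B * F)ᴴ
  have hB : Y'ᴴ * E * B = Yᴴ * D := by
    simpa only [mapRows_mul, hL, Matrix.mul_one] using congrArg (mapRows L) h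
  have hA : A * Y' = Y := by
    apply conjTranspose_injective
    calc (A * Y')ᴴ = Y'ᴴ * E * B * F := by
          simp only [A, conjTranspose_mul, conjTranspose_conjTranspose, Matrix.mul_assoc]
      _ = Yᴴ := by rw [hB, Matrix.mul_assoc, hDF, Matrix.mul_one]
  have hAB : A * B = 1 := by rw [← mapRows_mul, hA, hL]
  have hBA : B * A = 1 := mul_eq_one_comm.1 hAB
  exact ⟨B, by rw [← hA, ← Matrix.mul_assoc, hBA, Matrix.one_mul]⟩

theorem stmt11_general {Y : Matrix ι m K} (hY : LinearIndependent K Y.row) {D : Matrix ι ι K}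
    (hD : IsUnit D) (E : Matrix ι ι K) :
    (∀ B : Matrix ι ι K, (B * Y)ᴴ * E * (B * Y) = Yᴴ * D * Y ↔ Bᴴ * E * B = D) ∧
      ∀ Y' : Matrix ι m K, Y'ᴴ * E * Y' = Yᴴ * D * Y →
        ∃ B : Matrix ι ι K, Bᴴ * E * B = D ∧ Y' = B * Y := by
  refine ⟨conjTranspose_mul_mul_eq_iff hY, fun Y' h => ?_⟩
  obtain ⟨B, rfl⟩ := exists_eq_mul_of_conjTranspose_mul_mul_eq hY hD h
  exact ⟨B, (conjTranspose_mul_mul_eq_iff hY B).1 h, rfl⟩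

end HermitianForms

section Pairs

theorem mul_of_pair {R m : Type*} [Semiring R] (B : Matrix (Fin 2) (Fin 2) R) (x y : m → R) :
    B * of ![x, y] = of ![B 0 0 • x + B 0 1 • y, B 1 0 • x + B 1 1 • y] := by
  ext i j
  fin_cases i <;> simp [mul_apply]

theorem of_pair_eq_mul_of_pair_iff {R m : Type*} [Semiring R] {B : Matrix (Fin 2) (Fin 2) R}
    {x y x' y' : m → R} :
    of ![x', y'] = B * of ![x, y] ↔
      x' = B 0 0 • x + B 0 1 • y ∧ y' = B 1 0 • x + B 1 1 • y := by
  rw [mul_of_pair, of.injective.eq_iff, vecCons_inj, vecCons_inj, and_iff_left rfl]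

theorem outer_self_sub_outer_self {n : ℕ} (u v : Fin n → ℂ) :
    outer u u - outer v v = ((of ![u, v])ᴴ * !![(1 : ℂ), 0; 0, -1] * of ![u, v])ᵀ := by
  ext i j
  simp [outer, vecMulVec_apply, mul_apply, sub_eq_add_neg, mul_comm]

theorem isUnit_diag_one_neg_one {R : Type*} [Ring R] : IsUnit !![(1 : R), 0; 0, -1] :=
  IsUnit.of_pow_eq_one (n := 2) (by simp [sq, one_fin_two]) two_ne_zero

end Pairs

/-- Let `x, y` be linearly independent and `T = xx* − yy*`. For
`x' = b₁₁x + b₁₂y`, `y' = b₂₁x + b₂₂y` one has `x'(x')* − y'(y')* = xx* − yy*` iff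
`B* D B = D` with `D = [[1,0],[0,−1]]`; and every such pair `(x',y')` arises this way. -/
theorem stmt11 (n : ℕ) (x y : Fin n → ℂ)
    (hli : LinearIndependent ℂ ![x, y]) :
    (∀ B : Matrix (Fin 2) (Fin 2) ℂ,
        outer (B 0 0 • x + B 0 1 • y) (B 0 0 • x + B 0 1 • y)
            - outer (B 1 0 • x + B 1 1 • y) (B 1 0 • x + B 1 1 • y)
          = outer x x - outer y y
          ↔ Bᴴ * !![(1 : ℂ), 0; 0, -1] * B = !![(1 : ℂ), 0; 0, -1])
    ∧ (∀ x' y' : Fin n → ℂ,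
        outer x' x' - outer y' y' = outer x x - outer y y →
        ∃ B : Matrix (Fin 2) (Fin 2) ℂ,
          Bᴴ * !![(1 : ℂ), 0; 0, -1] * B = !![(1 : ℂ), 0; 0, -1] ∧
          x' = B 0 0 • x + B 0 1 • y ∧ y' = B 1 0 • x + B 1 1 • y) := by
  simp only [outer_self_sub_outer_self, transpose_inj, ← mul_of_pair, ← of_pair_eq_mul_of_pair_iff]
  exact (stmt11_general (Y := of ![x, y]) hli isUnit_diag_one_neg_one _).imp_right
    fun h_exists x' y' => h_exists (of ![x', y'])
end
end

section
/- The following are equivalent: (i) for every x ∈ ℂⁿ, the only Hermitian X with at most one positive and at most one negative eigenvalue satisfying A(X) = A(xx*) is X = xx* (Assumption A); (ii) ker A ∩ S^{2,1} = {0}, i.e. the only Hermitian matrix Z with at most two positive and at most one negative eigenvalue satisfying A(Z) = 0 is Z = 0; (iii) there exists a constant A₃ > 0 such that A₃ · ‖X − Y‖₁² ≤ ‖A(X) − A(Y)‖² for all X ∈ S^{1,1} and Y ∈ S^{1,0}, where the norm on ℝ^m is Euclidean. -/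
open scoped BigOperators ComplexConjugate
open Matrix

noncomputable section

/-- Number of strictly positive eigenvalues (with multiplicity) of a Hermitian matrix. -/
def posCount {n : ℕ} {𝕜 : Type*} [RCLike 𝕜] {X : Matrix (Fin n) (Fin n) 𝕜}
    (hX : X.IsHermitian) : ℕ :=
  Nat.card {i // 0 < hX.eigenvalues i}

/-- Number of strictly negative eigenvalues (with multiplicity) of a Hermitian matrix. -/
def negCount {n : ℕ} {𝕜 : Type*} [RCLike 𝕜] {X : Matrix (Fin n) (Fin n) 𝕜}
    (hX : X.IsHermitian) : ℕ :=
  Nat.card {i // hX.eigenvalues i < 0}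

/-- Nuclear norm of a Hermitian matrix: sum of absolute values of eigenvalues. -/
def nucNorm {n : ℕ} {𝕜 : Type*} [RCLike 𝕜] {X : Matrix (Fin n) (Fin n) 𝕜}
    (hX : X.IsHermitian) : ℝ :=
  ∑ i, |hX.eigenvalues i|

/-- The linear map `A` on Hermitian matrices, `A(T)ₖ = ⟨Tfₖ,fₖ⟩ = tr(T Fₖ)`
(a real number for Hermitian `T`). -/
def AcMap {n m : ℕ} (f : Fin m → Fin n → ℂ) (X : Matrix (Fin n) (Fin n) ℂ) : Fin m → ℝ :=
  fun k => (cip (X.mulVec (f k)) (f k)).re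

/-!
A Hermitian matrix lies in `S^{p,q}` iff it factors as `P P* - N N*` with `P` having `p` columns
and `N` having `q`. Concatenating and splitting columns gives `S^{p,q} - S^{r,s} = S^{p+s,q+r}`,
so injectivity of `A` on differences is triviality of its kernel on a single set of bounded
inertia. The nuclear unit sphere of that set is the continuous image `(U, d) ↦ U diag(d) U*` of a
compact set, hence if the kernel is trivial there, then `‖A Z‖` has a positive minimum on this
sphere and homogeneity gives the stability bound.
-/

open scoped ComplexOrder Pointwise

section Factorization

variable {𝕜 n α ι κ : Type*} [RCLike 𝕜] [Fintype α] [Fintype ι] [Fintype κ]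

theorem card_le_card_of_posDef_sub {P : Matrix α ι 𝕜} {N : Matrix α κ 𝕜}
    (h : (P * Pᴴ - N * Nᴴ).PosDef) : Fintype.card α ≤ Fintype.card ι := by
  classical
  have hP : (P * Pᴴ).PosDef := by
    simpa only [sub_add_cancel] using h.add_posSemidef (posSemidef_self_mul_conjTranspose N)
  calc Fintype.card α = P.rank := by
        rw [← rank_self_mul_conjTranspose, rank_of_isUnit _ hP.isUnit]
    _ ≤ Fintype.card ι := P.rank_le_card_width

theorem exists_mul_conjTranspose_eq_of_card_le {R : Type*} [Semiring R] [StarRing R]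
    (B : Matrix n α R) (h : Fintype.card α ≤ Fintype.card ι) :
    ∃ P : Matrix n ι R, P * Pᴴ = B * Bᴴ := by
  classical
  obtain ⟨e⟩ := Function.Embedding.nonempty_of_card_le h
  let S : Matrix α ι R := (1 : Matrix ι ι R).submatrix e id
  have hS : S * Sᴴ = 1 := by
    rw [conjTranspose_submatrix, conjTranspose_one,
      ← submatrix_mul _ _ _ _ _ Function.bijective_id, Matrix.one_mul, submatrix_one_embedding]
  refine ⟨B * S, ?_⟩
  rw [conjTranspose_mul, Matrix.mul_assoc, ← Matrix.mul_assoc S, hS, Matrix.one_mul]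

theorem mul_conjTranspose_sub_sub {R ι' κ' : Type*} [Ring R] [Star R] [Fintype ι']
    [Fintype κ'] (P : Matrix n ι R) (N : Matrix n κ R) (P' : Matrix n ι' R) (N' : Matrix n κ' R) :
    (P * Pᴴ - N * Nᴴ) - (P' * P'ᴴ - N' * N'ᴴ) =
      fromCols P N' * (fromCols P N')ᴴ - fromCols N P' * (fromCols N P')ᴴ := by
  simp only [conjTranspose_fromCols_eq_fromRows_conjTranspose, fromCols_mul_fromRows]
  abel

variable [Fintype n] [DecidableEq n]

/-- The Hermitian matrix `U diag(d) U*`; for unitary `U` it has eigenvalues `d`, and the columns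
of `U` are the eigenvectors. -/
def conjDiagonal (U : Matrix n n 𝕜) (d : n → ℝ) : Matrix n n 𝕜 :=
  U * diagonal (fun i => (d i : 𝕜)) * Uᴴ

theorem conjDiagonal_apply (U : Matrix n n 𝕜) (d : n → ℝ) (i j : n) :
    conjDiagonal U d i j = ∑ k, (d k : 𝕜) * (U i k * star (U j k)) := by
  rw [conjDiagonal, mul_apply]
  simp only [mul_diagonal, conjTranspose_apply]
  exact Finset.sum_congr rfl fun k _ => by ring

theorem conjDiagonal_sub (U : Matrix n n 𝕜) (d e : n → ℝ) :
    conjDiagonal U (d - e) = conjDiagonal U d - conjDiagonal U e := by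
  ext i j
  simp [conjDiagonal_apply, sub_mul]

theorem conjDiagonal_neg (U : Matrix n n 𝕜) (d : n → ℝ) :
    conjDiagonal U (-d) = -conjDiagonal U d := by
  ext i j
  simp [conjDiagonal_apply]

theorem conjDiagonal_smul (U : Matrix n n 𝕜) (c : ℝ) (d : n → ℝ) :
    conjDiagonal U (c • d) = c • conjDiagonal U d := by
  ext i j
  simp [conjDiagonal_apply, Finset.smul_sum, RCLike.real_smul_eq_coe_mul, mul_assoc]

theorem continuous_conjDiagonal :
    Continuous fun x : Matrix n n 𝕜 × (n → ℝ) => conjDiagonal x.1 x.2 := by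
  unfold conjDiagonal
  fun_prop

theorem conjTranspose_mul_conjDiagonal_mul {U : Matrix n n 𝕜} (hU : U ∈ unitaryGroup n 𝕜)
    (d : n → ℝ) : Uᴴ * conjDiagonal U d * U = diagonal (fun i => (d i : 𝕜)) := by
  have hUU : Uᴴ * U = 1 := mem_unitaryGroup_iff'.mp hU
  rw [conjDiagonal, Matrix.mul_assoc, Matrix.mul_assoc, hUU, Matrix.mul_one, ← Matrix.mul_assoc,
    hUU, Matrix.one_mul]

theorem conjDiagonal_eq_zero_iff {U : Matrix n n 𝕜} (hU : U ∈ unitaryGroup n 𝕜) {d : n → ℝ} :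
    conjDiagonal U d = 0 ↔ d = 0 := by
  constructor
  · intro h
    have hd := conjTranspose_mul_conjDiagonal_mul hU d
    rw [h, Matrix.mul_zero, Matrix.zero_mul, eq_comm, diagonal_eq_zero] at hd
    exact funext fun i => RCLike.ofReal_eq_zero.mp (congrFun hd i)
  · rintro rfl
    simp [conjDiagonal]

theorem conjDiagonal_eigenvalues {X : Matrix n n 𝕜} (hX : X.IsHermitian) :
    conjDiagonal (hX.eigenvectorUnitary : Matrix n n 𝕜) hX.eigenvalues = X :=
  hX.spectral_theorem.symm

theorem card_pos_le_of_conjDiagonal_eq {U : Matrix n n 𝕜} (hU : U ∈ unitaryGroup n 𝕜)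
    {d : n → ℝ} {P : Matrix n ι 𝕜} {N : Matrix n κ 𝕜}
    (h : conjDiagonal U d = P * Pᴴ - N * Nᴴ) :
    Nat.card {i // 0 < d i} ≤ Fintype.card ι := by
  -- Compressing to the eigenvectors with positive eigenvalue leaves a positive definite matrix.
  let V : Matrix n {i // 0 < d i} 𝕜 := U.submatrix id Subtype.val
  have hV : Vᴴ * conjDiagonal U d * V = diagonal fun i : {i // 0 < d i} => (d i : 𝕜) := by
    change (Uᴴ * conjDiagonal U d * U).submatrix Subtype.val Subtype.val = _
    rw [conjTranspose_mul_conjDiagonal_mul hU, submatrix_diagonal _ _ Subtype.val_injective]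
    rfl
  have hfactor : (Vᴴ * P) * (Vᴴ * P)ᴴ - (Vᴴ * N) * (Vᴴ * N)ᴴ = Vᴴ * conjDiagonal U d * V := by
    simp only [h, conjTranspose_mul, conjTranspose_conjTranspose, Matrix.mul_sub, Matrix.sub_mul,
      Matrix.mul_assoc]
  rw [Nat.card_eq_fintype_card]
  apply card_le_card_of_posDef_sub (P := Vᴴ * P) (N := Vᴴ * N)
  rw [hfactor, hV]
  exact PosDef.diagonal fun i => RCLike.ofReal_pos.mpr i.2

theorem card_neg_le_of_conjDiagonal_eq {U : Matrix n n 𝕜} (hU : U ∈ unitaryGroup n 𝕜)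
    {d : n → ℝ} {P : Matrix n ι 𝕜} {N : Matrix n κ 𝕜}
    (h : conjDiagonal U d = P * Pᴴ - N * Nᴴ) :
    Nat.card {i // d i < 0} ≤ Fintype.card κ := by
  have hneg : conjDiagonal U (-d) = N * Nᴴ - P * Pᴴ := by rw [conjDiagonal_neg, h, neg_sub]
  simpa only [Pi.neg_apply, neg_pos] using card_pos_le_of_conjDiagonal_eq hU hneg

theorem exists_conjDiagonal_posPart_eq (U : Matrix n n 𝕜) {d : n → ℝ}
    (h : Nat.card {i // 0 < d i} ≤ Fintype.card ι) :
    ∃ P : Matrix n ι 𝕜, conjDiagonal U d⁺ = P * Pᴴ := by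
  rw [Nat.card_eq_fintype_card] at h
  let B : Matrix n {i // 0 < d i} 𝕜 := of fun i k => (√(d k) : 𝕜) * U i k
  obtain ⟨P, hP⟩ := exists_mul_conjTranspose_eq_of_card_le B h
  refine ⟨P, ?_⟩
  ext i j
  rw [hP, conjDiagonal_apply, mul_apply]
  symm
  refine Fintype.sum_of_injective _ Subtype.val_injective _ _ (fun k hk => ?_) fun k => ?_
  · have hdk : d k ≤ 0 := by simpa using hk
    simp [Pi.posPart_apply, posPart_eq_zero.mpr hdk]
  · have hsqrt : (√(d k) : 𝕜) * (√(d k) : 𝕜) = (d k : 𝕜) := by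
      rw [← RCLike.ofReal_mul, Real.mul_self_sqrt k.2.le]
    simp only [B, conjTranspose_apply, of_apply, star_mul', RCLike.star_def, RCLike.conj_ofReal,
      Pi.posPart_apply, posPart_of_nonneg k.2.le, ← hsqrt]
    ring

theorem exists_conjDiagonal_eq (U : Matrix n n 𝕜) {d : n → ℝ}
    (hpos : Nat.card {i // 0 < d i} ≤ Fintype.card ι)
    (hneg : Nat.card {i // d i < 0} ≤ Fintype.card κ) :
    ∃ (P : Matrix n ι 𝕜) (N : Matrix n κ 𝕜), conjDiagonal U d = P * Pᴴ - N * Nᴴ := by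
  obtain ⟨P, hP⟩ := exists_conjDiagonal_posPart_eq U hpos
  obtain ⟨N, hN⟩ := exists_conjDiagonal_posPart_eq (ι := κ) U (d := -d)
    (by simpa only [Pi.neg_apply, neg_pos] using hneg)
  refine ⟨P, N, ?_⟩
  rw [← hP, ← hN, ← conjDiagonal_sub, posPart_neg, posPart_sub_negPart]

end Factorization

section InertiaSet

variable {𝕜 : Type*} [RCLike 𝕜] {n p q r s : ℕ}

/-- The set `S^{p,q}` of Hermitian matrices with at most `p` positive and at most `q` negative
eigenvalues. -/
def inertiaSet (p q : ℕ) : Set (Matrix (Fin n) (Fin n) 𝕜) :=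
  {X | ∃ hX : X.IsHermitian, posCount hX ≤ p ∧ negCount hX ≤ q}

theorem mem_inertiaSet {X : Matrix (Fin n) (Fin n) 𝕜} :
    X ∈ inertiaSet p q ↔ ∃ hX : X.IsHermitian, posCount hX ≤ p ∧ negCount hX ≤ q :=
  Iff.rfl

theorem mem_inertiaSet_card_iff {ι κ : Type*} [Fintype ι] [Fintype κ]
    {X : Matrix (Fin n) (Fin n) 𝕜} :
    X ∈ inertiaSet (Fintype.card ι) (Fintype.card κ) ↔
      ∃ (P : Matrix (Fin n) ι 𝕜) (N : Matrix (Fin n) κ 𝕜), X = P * Pᴴ - N * Nᴴ := by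
  constructor
  · rintro ⟨hX, hpos, hneg⟩
    simpa only [conjDiagonal_eigenvalues] using
      exists_conjDiagonal_eq (hX.eigenvectorUnitary : Matrix (Fin n) (Fin n) 𝕜) hpos hneg
  · rintro ⟨P, N, h⟩
    have hX : X.IsHermitian :=
      h ▸ (isHermitian_mul_conjTranspose_self P).sub (isHermitian_mul_conjTranspose_self N)
    have hspec := (conjDiagonal_eigenvalues hX).trans h
    exact ⟨hX, card_pos_le_of_conjDiagonal_eq hX.eigenvectorUnitary.2 hspec,
      card_neg_le_of_conjDiagonal_eq hX.eigenvectorUnitary.2 hspec⟩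

theorem mem_inertiaSet_iff {X : Matrix (Fin n) (Fin n) 𝕜} :
    X ∈ inertiaSet p q ↔ ∃ (P : Matrix (Fin n) (Fin p) 𝕜) (N : Matrix (Fin n) (Fin q) 𝕜),
      X = P * Pᴴ - N * Nᴴ := by
  simpa only [Fintype.card_fin] using mem_inertiaSet_card_iff (ι := Fin p) (κ := Fin q) (X := X)

theorem neg_mem_inertiaSet_iff {X : Matrix (Fin n) (Fin n) 𝕜} :
    -X ∈ inertiaSet p q ↔ X ∈ inertiaSet q p := by
  simp only [mem_inertiaSet_iff, neg_eq_iff_eq_neg, neg_sub]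
  exact exists_comm

theorem conjDiagonal_mem_inertiaSet (U : Matrix (Fin n) (Fin n) 𝕜) {d : Fin n → ℝ}
    (hpos : Nat.card {i // 0 < d i} ≤ p) (hneg : Nat.card {i // d i < 0} ≤ q) :
    conjDiagonal U d ∈ inertiaSet p q :=
  mem_inertiaSet_iff.mpr <| exists_conjDiagonal_eq U (by rwa [Fintype.card_fin])
    (by rwa [Fintype.card_fin])

theorem inertiaSet_sub_inertiaSet :
    (inertiaSet p q - inertiaSet r s : Set (Matrix (Fin n) (Fin n) 𝕜)) =
      inertiaSet (p + s) (q + r) := by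
  have hsum (Z : Matrix (Fin n) (Fin n) 𝕜) : Z ∈ inertiaSet (p + s) (q + r) ↔
      ∃ (P : Matrix (Fin n) (Fin p ⊕ Fin s) 𝕜) (N : Matrix (Fin n) (Fin q ⊕ Fin r) 𝕜),
        Z = P * Pᴴ - N * Nᴴ := by
    simpa only [Fintype.card_sum, Fintype.card_fin] using
      mem_inertiaSet_card_iff (ι := Fin p ⊕ Fin s) (κ := Fin q ⊕ Fin r) (X := Z)
  ext Z
  rw [Set.mem_sub, hsum]
  constructor
  · rintro ⟨X, hX, Y, hY, rfl⟩
    obtain ⟨P, N, rfl⟩ := mem_inertiaSet_iff.mp hX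
    obtain ⟨P', N', rfl⟩ := mem_inertiaSet_iff.mp hY
    exact ⟨fromCols P N', fromCols N P', mul_conjTranspose_sub_sub P N P' N'⟩
  · rintro ⟨P, N, rfl⟩
    refine ⟨_, mem_inertiaSet_iff.mpr ⟨P.toCols₁, N.toCols₁, rfl⟩,
      _, mem_inertiaSet_iff.mpr ⟨N.toCols₂, P.toCols₂, rfl⟩, ?_⟩
    rw [mul_conjTranspose_sub_sub, fromCols_toCols, fromCols_toCols]

theorem inertiaSet_one_zero :
    (inertiaSet 1 0 : Set (Matrix (Fin n) (Fin n) 𝕜)) =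
      Set.range fun x => vecMulVec x (star x) := by
  ext X
  rw [mem_inertiaSet_iff]
  constructor
  · rintro ⟨P, N, rfl⟩
    refine ⟨P.col 0, ?_⟩
    ext i j
    simp [vecMulVec_apply, mul_apply]
  · rintro ⟨x, rfl⟩
    refine ⟨of fun i _ => x i, 0, ?_⟩
    ext i j
    simp [vecMulVec_apply, mul_apply]

theorem forall_mem_inertiaSet_one_zero {C : Matrix (Fin n) (Fin n) 𝕜 → Prop} :
    (∀ Y ∈ inertiaSet 1 0, C Y) ↔ ∀ x, C (vecMulVec x (star x)) := by
  rw [inertiaSet_one_zero, Set.forall_mem_range]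

end InertiaSet

section Stability

variable {𝕜 : Type*} [RCLike 𝕜]

theorem isCompact_unitaryGroup {n : Type*} [Fintype n] [DecidableEq n] :
    IsCompact (unitaryGroup n 𝕜 : Set (Matrix n n 𝕜)) := by
  have hbox : IsCompact (Set.univ.pi fun _ : n => Set.univ.pi fun _ : n =>
      Metric.closedBall (0 : 𝕜) 1) :=
    isCompact_univ_pi fun _ => isCompact_univ_pi fun _ => isCompact_closedBall 0 1
  refine hbox.of_isClosed_subset (isClosed_unitary (R := Matrix n n 𝕜)) fun U hU i _ j _ => ?_
  simpa only [mem_closedBall_zero_iff] using entry_norm_bound_of_unitary hU i j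

theorem isClosed_setOf_card_pos_le {ι : Type*} [Finite ι] (p : ℕ) :
    IsClosed {d : ι → ℝ | Nat.card {i // 0 < d i} ≤ p} := by
  rw [← isOpen_compl_iff, isOpen_iff_eventually]
  intro d hd
  have hpos : ∀ᶠ e in nhds d, ∀ i, 0 < d i → 0 < e i :=
    Filter.eventually_all.mpr fun i => Filter.eventually_imp_distrib_left.mpr fun hi =>
      (continuous_apply i).continuousAt.eventually_const_lt hi
  filter_upwards [hpos] with e he hcard
  have hle : Nat.card {i // 0 < d i} ≤ Nat.card {i // 0 < e i} :=
    Nat.card_le_card_of_injective _ (Subtype.impEmbedding _ _ he).injective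
  exact hd (hle.trans hcard)

theorem isClosed_setOf_card_neg_le {ι : Type*} [Finite ι] (q : ℕ) :
    IsClosed {d : ι → ℝ | Nat.card {i // d i < 0} ≤ q} := by
  simpa only [Set.preimage_ofPred_eq, Pi.neg_apply, neg_pos] using
    (isClosed_setOf_card_pos_le q).preimage (continuous_neg (G := ι → ℝ))

/-- The possible spectra, with at most `p` positive and `q` negative entries, of matrices on the
unit sphere of the nuclear norm. -/
def unitSpectra (ι : Type*) [Fintype ι] (p q : ℕ) : Set (ι → ℝ) :=
  {d | ∑ i, |d i| = 1 ∧ Nat.card {i // 0 < d i} ≤ p ∧ Nat.card {i // d i < 0} ≤ q}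

theorem isCompact_unitSpectra (ι : Type*) [Fintype ι] (p q : ℕ) :
    IsCompact (unitSpectra ι p q) := by
  have hclosed : IsClosed (unitSpectra ι p q) :=
    (isClosed_eq (by fun_prop) continuous_const).inter
      ((isClosed_setOf_card_pos_le p).inter (isClosed_setOf_card_neg_le q))
  refine (isCompact_univ_pi fun _ => isCompact_Icc (a := (-1 : ℝ)) (b := 1)).of_isClosed_subset
    hclosed fun d hd i _ => abs_le.mp ?_
  calc |d i| ≤ ∑ j, |d j| :=
        Finset.single_le_sum (f := fun j => |d j|) (fun j _ => abs_nonneg _) (Finset.mem_univ i)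
    _ = 1 := hd.1

variable {n : ℕ} {p q r s : ℕ}

theorem nucNorm_nonneg {X : Matrix (Fin n) (Fin n) 𝕜} (hX : X.IsHermitian) : 0 ≤ nucNorm hX :=
  Finset.sum_nonneg fun _ _ => abs_nonneg _

theorem nucNorm_eq_zero_iff {X : Matrix (Fin n) (Fin n) 𝕜} (hX : X.IsHermitian) :
    nucNorm hX = 0 ↔ X = 0 := by
  rw [nucNorm, Fintype.sum_eq_zero_iff_of_nonneg fun _ => abs_nonneg _,
    ← hX.eigenvalues_eq_zero_iff]
  simp only [funext_iff, Pi.zero_apply, abs_eq_zero]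

variable {E : Type*} [NormedAddCommGroup E] [NormedSpace ℝ E]

theorem inv_smul_eigenvalues_mem_unitSpectra {X : Matrix (Fin n) (Fin n) 𝕜} (hX : X.IsHermitian)
    (hmem : X ∈ inertiaSet p q) (hnuc : 0 < nucNorm hX) :
    (nucNorm hX)⁻¹ • hX.eigenvalues ∈ unitSpectra (Fin n) p q := by
  have hinv : 0 < (nucNorm hX)⁻¹ := inv_pos.mpr hnuc
  obtain ⟨_, hpos : Nat.card {i // 0 < hX.eigenvalues i} ≤ p,
    hneg : Nat.card {i // hX.eigenvalues i < 0} ≤ q⟩ := hmem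
  refine ⟨?_, ?_, ?_⟩
  · simp only [Pi.smul_apply, smul_eq_mul, abs_mul, abs_of_pos hinv, ← Finset.mul_sum]
    exact inv_mul_cancel₀ hnuc.ne'
  · simpa only [Pi.smul_apply, smul_pos_iff_of_pos_left hinv] using hpos
  · simpa only [Pi.smul_apply, smul_neg_iff_of_pos_left hinv] using hneg

theorem exists_pos_forall_mul_nucNorm_le (A : Matrix (Fin n) (Fin n) 𝕜 →ₗ[ℝ] E)
    (hker : ∀ Z ∈ inertiaSet p q, A Z = 0 → Z = 0) :
    ∃ c : ℝ, 0 < c ∧ ∀ Z ∈ inertiaSet p q, ∀ hZ : Z.IsHermitian, c * nucNorm hZ ≤ ‖A Z‖ := by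
  have hcont : Continuous fun x : Matrix (Fin n) (Fin n) 𝕜 × (Fin n → ℝ) =>
      ‖A (conjDiagonal x.1 x.2)‖ :=
    (A.continuous_of_finiteDimensional.comp continuous_conjDiagonal).norm
  have hpos : ∀ x ∈ (unitaryGroup (Fin n) 𝕜 : Set _) ×ˢ unitSpectra (Fin n) p q,
      0 < ‖A (conjDiagonal x.1 x.2)‖ := by
    rintro ⟨U, d⟩ ⟨hU, hsum, hdpos, hdneg⟩
    refine norm_pos_iff.mpr fun hA => ?_
    have hd : d = 0 := (conjDiagonal_eq_zero_iff hU).mp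
      (hker _ (conjDiagonal_mem_inertiaSet U hdpos hdneg) hA)
    simp [hd] at hsum
  obtain ⟨c, hc, hmin⟩ := (isCompact_unitaryGroup.prod
    (isCompact_unitSpectra (Fin n) p q)).exists_forall_le' hcont.continuousOn hpos
  refine ⟨c, hc, fun Z hmem hZ => ?_⟩
  rcases (nucNorm_nonneg hZ).eq_or_lt with hnuc | hnuc
  · rw [← hnuc, mul_zero]
    exact norm_nonneg _
  · have hle := hmin (hZ.eigenvectorUnitary, (nucNorm hZ)⁻¹ • hZ.eigenvalues)
      ⟨hZ.eigenvectorUnitary.2, inv_smul_eigenvalues_mem_unitSpectra hZ hmem hnuc⟩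
    rw [conjDiagonal_smul, conjDiagonal_eigenvalues, map_smul, norm_smul,
      Real.norm_of_nonneg (inv_nonneg.mpr hnuc.le), ← div_eq_inv_mul] at hle
    exact (le_div_iff₀ hnuc).mp hle

theorem stmt18_general (A : Matrix (Fin n) (Fin n) 𝕜 →ₗ[ℝ] E) (p q r s : ℕ) :
    List.TFAE
      [ ∀ Y ∈ inertiaSet r s, ∀ X ∈ inertiaSet p q, A X = A Y → X = Y,
        ∀ Z ∈ inertiaSet (q + r) (p + s), A Z = 0 → Z = 0,
        ∃ c : ℝ, 0 < c ∧ ∀ X Y, X ∈ inertiaSet p q → Y ∈ inertiaSet r s →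
          ∀ hXY : (X - Y).IsHermitian, c * nucNorm hXY ^ 2 ≤ ‖A X - A Y‖ ^ 2 ] := by
  tfae_have 1 → 2 := by
    intro hinj Z hZ hAZ
    rw [← neg_mem_inertiaSet_iff, ← inertiaSet_sub_inertiaSet] at hZ
    obtain ⟨X, hX, Y, hY, hXY : X - Y = -Z⟩ := hZ
    have hA : A X = A Y := by rw [← sub_eq_zero, ← map_sub, hXY, map_neg, hAZ, neg_zero]
    rw [← neg_eq_zero, ← hXY, sub_eq_zero]
    exact hinj Y hY X hX hA
  tfae_have 2 → 3 := by
    intro hker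
    have hker' : ∀ Z ∈ inertiaSet (p + s) (q + r), A Z = 0 → Z = 0 := fun Z hZ hAZ =>
      neg_eq_zero.mp (hker (-Z) (neg_mem_inertiaSet_iff.mpr hZ) (by rw [map_neg, hAZ, neg_zero]))
    obtain ⟨c, hc, hle⟩ := exists_pos_forall_mul_nucNorm_le A hker'
    refine ⟨c ^ 2, pow_pos hc 2, fun X Y hX hY hXY => ?_⟩
    have hmem : X - Y ∈ inertiaSet (p + s) (q + r) :=
      inertiaSet_sub_inertiaSet.subset (Set.sub_mem_sub hX hY)
    rw [← mul_pow, ← map_sub]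
    exact pow_le_pow_left₀ (mul_nonneg hc.le (nucNorm_nonneg hXY)) (hle _ hmem hXY) 2
  tfae_have 3 → 1 := by
    rintro ⟨c, hc, hle⟩ Y hY X hX hA
    have hXY : (X - Y).IsHermitian := hX.1.sub hY.1
    have hsq : c * nucNorm hXY ^ 2 ≤ 0 := by simpa [hA] using hle X Y hX hY hXY
    have hnuc : nucNorm hXY = 0 :=
      sq_nonpos_iff _ |>.mp (nonpos_of_mul_nonpos_right hsq hc)
    exact sub_eq_zero.mp ((nucNorm_eq_zero_iff hXY).mp hnuc)
  tfae_finish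

end Stability

section Measurement

variable {n m : ℕ}

/-- The linear map `A` of the frame `f`, with values in Euclidean space. -/
def measurement (f : Fin m → Fin n → ℂ) :
    Matrix (Fin n) (Fin n) ℂ →ₗ[ℝ] EuclideanSpace ℝ (Fin m) where
  toFun X := WithLp.toLp 2 (AcMap f X)
  map_add' X Y := by
    ext k
    simp [AcMap, cip, add_mulVec, add_mul, Finset.sum_add_distrib]
  map_smul' c X := by
    ext k
    simp [AcMap, cip, smul_mulVec, Finset.mul_sum, mul_assoc]

theorem measurement_eq_zero_iff (f : Fin m → Fin n → ℂ) (X : Matrix (Fin n) (Fin n) ℂ) :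
    measurement f X = 0 ↔ AcMap f X = 0 :=
  WithLp.toLp_eq_zero 2

theorem measurement_eq_iff (f : Fin m → Fin n → ℂ) (X Y : Matrix (Fin n) (Fin n) ℂ) :
    measurement f X = measurement f Y ↔ AcMap f X = AcMap f Y :=
  (WithLp.toLp_injective 2).eq_iff

theorem norm_measurement_sub_sq (f : Fin m → Fin n → ℂ) (X Y : Matrix (Fin n) (Fin n) ℂ) :
    ‖measurement f X - measurement f Y‖ ^ 2 = ∑ k, (AcMap f X k - AcMap f Y k) ^ 2 :=
  EuclideanSpace.real_norm_sq_eq _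

end Measurement

/-- The following are equivalent: (i) for every `x`, the only `X ∈ S^{1,1}`
with `A(X) = A(xx*)` is `X = xx*`; (ii) the only `Z ∈ S^{2,1}` with `A(Z) = 0` is `Z = 0`;
(iii) there is `A₃ > 0` with `A₃‖X − Y‖₁² ≤ ‖A(X) − A(Y)‖²` for all `X ∈ S^{1,1}`,
`Y ∈ S^{1,0}`. -/
theorem stmt18 (n m : ℕ) (f : Fin m → Fin n → ℂ)
    (hspan : Submodule.span ℂ (Set.range f) = ⊤) :
    List.TFAE
      [ ∀ (x : Fin n → ℂ) (X : Matrix (Fin n) (Fin n) ℂ) (hX : X.IsHermitian),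
          posCount hX ≤ 1 → negCount hX ≤ 1 →
          AcMap f X = AcMap f (outer x x) → X = outer x x,
        ∀ (Z : Matrix (Fin n) (Fin n) ℂ) (hZ : Z.IsHermitian),
          posCount hZ ≤ 2 → negCount hZ ≤ 1 → AcMap f Z = 0 → Z = 0,
        ∃ A₃ : ℝ, 0 < A₃ ∧
          ∀ (X Y : Matrix (Fin n) (Fin n) ℂ) (hX : X.IsHermitian) (hY : Y.IsHermitian)
            (hXY : (X - Y).IsHermitian),
            posCount hX ≤ 1 → negCount hX ≤ 1 → posCount hY ≤ 1 → negCount hY ≤ 0 →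
            A₃ * nucNorm hXY ^ 2 ≤ ∑ k, (AcMap f X k - AcMap f Y k) ^ 2 ] := by
  -- `forall_comm` moves the Hermitian hypotheses in front of the bounds on the inertia.
  simpa only [↓forall_mem_inertiaSet_one_zero, mem_inertiaSet, forall_exists_index, and_imp,
    forall_comm (α := _ ≤ _) (β := IsHermitian _), measurement_eq_iff, measurement_eq_zero_iff,
    norm_measurement_sub_sq, outer, Nat.reduceAdd] using stmt18_general (measurement f) 1 1 1 0
end
end
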